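/- For all integers m, n ≥ 2 and every edge e of C_{2m} ∨ O_{2n−1}, χ_la((C_{2m} ∨ O_{2n−1}) − e) = 3. -/

import Mathlib

open Finset SimpleGraph
open scoped Classical

/-- The induced vertex label (weight) of `x`: the sum of `f` over all edges incident to `x`. -/
noncomputable def vertexWeight {V : Type*} [Fintype V] (G : SimpleGraph V)
    (f : Sym2 V → ℕ) (x : V) : ℕ :=
  ∑ e ∈ G.edgeFinset.filter (fun e => x ∈ e), f e

/-- `f` is a local antimagic labeling of `G`: it restricts to a bijection from the edge set of
`G` onto `{1, …, q}` (where `q` is the number of edges), and adjacent vertices get distinct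
induced vertex labels. -/
def IsLocalAntimagic {V : Type*} [Fintype V] (G : SimpleGraph V) (f : Sym2 V → ℕ) : Prop :=
  Set.BijOn f G.edgeSet (Set.Icc 1 G.edgeSet.ncard) ∧
  ∀ ⦃x y : V⦄, G.Adj x y → vertexWeight G f x ≠ vertexWeight G f y

/-- The number of distinct induced vertex labels, `c(f)`. -/
noncomputable def colorCount {V : Type*} [Fintype V] (G : SimpleGraph V)
    (f : Sym2 V → ℕ) : ℕ :=
  (Finset.univ.image (vertexWeight G f)).card

/-- The local antimagic chromatic number `χ_la(G)`. -/
noncomputable def chiLA {V : Type*} [Fintype V] (G : SimpleGraph V) : ℕ :=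
  sInf { n | ∃ f : Sym2 V → ℕ, IsLocalAntimagic G f ∧ colorCount G f = n }

/-- The join `G ∨ H` of two vertex-disjoint graphs. -/
def joinG {α β : Type*} (G : SimpleGraph α) (H : SimpleGraph β) : SimpleGraph (α ⊕ β) :=
  SimpleGraph.fromRel (fun x y =>
    (∃ a b, x = Sum.inl a ∧ y = Sum.inl b ∧ G.Adj a b) ∨
    (∃ a b, x = Sum.inr a ∧ y = Sum.inr b ∧ H.Adj a b) ∨
    (∃ a b, x = Sum.inl a ∧ y = Sum.inr b))

/-!
A triangle of `C_{2m} ∨ O_{2n-1}` survives the deletion of any edge, and its vertices have distinct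
weights, so three values are necessary. Conversely, label the edges bijectively by `0, …, q - 1` so
that the cycle vertices of even index, those of odd index, and the vertices of `O_{2n-1}` have one
weight each; deleting the edge labeled `0` changes no weight. Up to the symmetries of the graph the
deleted edge is one fixed cycle edge or one fixed spoke, and both cases use the same pattern: the
cycle edges receive either the `2m` smallest or the `2m` largest labels.
-/

theorem image_eq_range_card {ι : Type*} {s : Finset ι} {f : ι → ℕ} (hinj : Set.InjOn f s)
    (hlt : ∀ x ∈ s, f x < s.card) : s.image f = Finset.range s.card :=
  Finset.eq_of_subset_of_card_le
    (Finset.image_subset_iff.mpr fun x hx => Finset.mem_range.mpr (hlt x hx))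
    (by rw [Finset.card_image_of_injOn hinj, Finset.card_range])

/-- An isomorphism carries the deletion of `e` to the deletion of the image of `e`. -/
def deleteEdgeIso {V W : Type*} {G : SimpleGraph V} {H : SimpleGraph W}
    (φ : G ≃g H) (e : Sym2 V) : G.deleteEdges {e} ≃g H.deleteEdges {Sym2.map φ e} where
  toEquiv := φ.toEquiv
  map_rel_iff' {x y} := by
    have h : s(φ x, φ y) = Sym2.map φ e ↔ s(x, y) = e := by
      rw [← Sym2.map_mk, (Sym2.map.injective φ.injective).eq_iff]
    simp [φ.map_adj_iff, h]

section LocalAntimagic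

variable {V W : Type*} [Fintype V] [Fintype W] {G : SimpleGraph V} {H : SimpleGraph W}

theorem vertexWeight_eq_sum (G : SimpleGraph V) (f : Sym2 V → ℕ) (x : V) :
    vertexWeight G f x = ∑ y, if G.Adj x y then f s(x, y) else 0 := by
  rw [vertexWeight, ← Finset.sum_filter]
  refine (Finset.sum_nbij (fun y => s(x, y)) ?_ ?_ ?_ fun _ _ => rfl).symm
  · intro y hy
    simpa using hy
  · intro y _ z _ h
    exact Sym2.congr_right.mp h
  · intro e he
    obtain ⟨he, y, rfl⟩ : e ∈ G.edgeSet ∧ x ∈ e := by simpa using he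
    exact ⟨y, by simpa using he, rfl⟩

theorem vertexWeight_comp_map (φ : G ≃g H) (f : Sym2 W → ℕ) (x : V) :
    vertexWeight G (f ∘ Sym2.map φ) x = vertexWeight H f (φ x) := by
  rw [vertexWeight_eq_sum, vertexWeight_eq_sum]
  refine Fintype.sum_equiv φ.toEquiv _ _ fun y => ?_
  simp [φ.map_adj_iff]

theorem vertexWeight_deleteEdges_of_eq_zero {f : Sym2 V → ℕ} {e : Sym2 V} (h0 : f e = 0) (x : V) :
    vertexWeight (G.deleteEdges {e}) f x = vertexWeight G f x := by
  rw [vertexWeight_eq_sum, vertexWeight_eq_sum]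
  refine Finset.sum_congr rfl fun y _ => ?_
  by_cases hy : s(x, y) = e
  · simp [hy, h0]
  · simp [hy]

theorem IsLocalAntimagic.comp_map {f : Sym2 W → ℕ} (hf : IsLocalAntimagic H f) (φ : G ≃g H) :
    IsLocalAntimagic G (f ∘ Sym2.map φ) := by
  have hφ : Set.BijOn (Sym2.map φ) G.edgeSet H.edgeSet := by
    refine ⟨fun e => (φ.map_mem_edgeSet_iff).mpr, (Sym2.map.injective φ.injective).injOn, ?_⟩
    intro e he
    exact ⟨Sym2.map φ.symm e, φ.symm.map_mem_edgeSet_iff.mpr he, by simp [Sym2.map_map]⟩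
  refine ⟨?_, fun x y hxy => ?_⟩
  · rw [hφ.ncard_eq]
    exact hf.1.comp hφ
  · rw [vertexWeight_comp_map, vertexWeight_comp_map]
    exact hf.2 (φ.map_adj_iff.mpr hxy)

theorem colorCount_comp_map (φ : G ≃g H) (f : Sym2 W → ℕ) :
    colorCount G (f ∘ Sym2.map φ) = colorCount H f := by
  have h : vertexWeight G (f ∘ Sym2.map φ) = vertexWeight H f ∘ φ :=
    funext (vertexWeight_comp_map φ f)
  rw [colorCount, colorCount, h, ← Finset.image_image,
    Finset.image_univ_of_surjective φ.surjective]

theorem chiLA_congr (φ : G ≃g H) : chiLA G = chiLA H := by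
  refine congrArg sInf (Set.ext fun k => ⟨?_, ?_⟩)
  · rintro ⟨f, hf, rfl⟩
    exact ⟨_, hf.comp_map φ.symm, colorCount_comp_map φ.symm f⟩
  · rintro ⟨f, hf, rfl⟩
    exact ⟨_, hf.comp_map φ, colorCount_comp_map φ f⟩

theorem IsLocalAntimagic.card_le_colorCount {f : Sym2 V → ℕ} (hf : IsLocalAntimagic G f)
    {s : Finset V} (hs : G.IsClique s) : s.card ≤ colorCount G f :=
  Finset.card_le_card_of_injOn (vertexWeight G f)
    (fun x _ => Finset.mem_image_of_mem _ (Finset.mem_univ x))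
    fun _ hx _ hy hxy => by_contra fun hne => hf.2 (hs hx hy hne) hxy

theorem chiLA_eq_of_isNClique {f : Sym2 V → ℕ} {k : ℕ} {s : Finset V} (hf : IsLocalAntimagic G f)
    (hs : G.IsNClique k s) (hk : colorCount G f ≤ k) : chiLA G = k := by
  have lower {g : Sym2 V → ℕ} (hg : IsLocalAntimagic G g) : k ≤ colorCount G g :=
    hs.card_eq ▸ hg.card_le_colorCount hs.isClique
  refine le_antisymm (Nat.sInf_le ⟨f, hf, hk.antisymm (lower hf)⟩)
    (le_csInf ⟨_, f, hf, rfl⟩ ?_)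
  rintro _ ⟨g, hg, rfl⟩
  exact lower hg

/-- A local antimagic labeling with labels `0, …, q - 1` instead of `1, …, q`. Deleting the edge
labeled `0` changes no weight, so such a labeling of `G` solves the problem for `G - e`. -/
def IsZeroBasedLocalAntimagic (G : SimpleGraph V) (f : Sym2 V → ℕ) : Prop :=
  Set.BijOn f G.edgeSet (Set.Iio G.edgeSet.ncard) ∧
  ∀ ⦃x y : V⦄, G.Adj x y → vertexWeight G f x ≠ vertexWeight G f y

theorem IsZeroBasedLocalAntimagic.deleteEdges {f : Sym2 V → ℕ} {e : Sym2 V}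
    (hf : IsZeroBasedLocalAntimagic G f) (he : e ∈ G.edgeSet) (h0 : f e = 0) :
    IsLocalAntimagic (G.deleteEdges {e}) f := by
  refine ⟨?_, fun x y hxy => ?_⟩
  · have hcard : (G.deleteEdges {e}).edgeSet.ncard = G.edgeSet.ncard - 1 := by
      rw [edgeSet_deleteEdges, Set.ncard_sdiff_singleton_of_mem he]
    have hIcc : Set.Icc 1 (G.edgeSet.ncard - 1) = Set.Iio G.edgeSet.ncard \ {0} := by
      ext k
      simp only [Set.mem_Icc, Set.mem_sdiff, Set.mem_Iio, Set.mem_singleton_iff]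
      omega
    rw [hcard, hIcc, edgeSet_deleteEdges, ← h0]
    exact hf.1.sdiff_singleton he
  · rw [vertexWeight_deleteEdges_of_eq_zero h0, vertexWeight_deleteEdges_of_eq_zero h0]
    exact hf.2 ((deleteEdges_le _) hxy)

end LocalAntimagic

section Join

variable {α β : Type*} {G : SimpleGraph α} {H : SimpleGraph β}

@[simp]
theorem joinG_adj_inl_inl {a a' : α} : (joinG G H).Adj (.inl a) (.inl a') ↔ G.Adj a a' := by
  simpa [joinG, G.adj_comm a' a] using G.ne_of_adj

@[simp]
theorem joinG_adj_inr_inr {b b' : β} : (joinG G H).Adj (.inr b) (.inr b') ↔ H.Adj b b' := by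
  simpa [joinG, H.adj_comm b' b] using H.ne_of_adj

@[simp]
theorem joinG_adj_inl_inr {a : α} {b : β} : (joinG G H).Adj (.inl a) (.inr b) := by
  simp [joinG]

@[simp]
theorem joinG_adj_inr_inl {a : α} {b : β} : (joinG G H).Adj (.inr b) (.inl a) :=
  joinG_adj_inl_inr.symm

/-- Isomorphisms of both factors induce an isomorphism of joins. -/
def joinGCongr {α' β' : Type*} {G' : SimpleGraph α'} {H' : SimpleGraph β'}
    (φ : G ≃g G') (ψ : H ≃g H') : joinG G H ≃g joinG G' H' where
  toEquiv := φ.toEquiv.sumCongr ψ.toEquiv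
  map_rel_iff' {x y} := by
    rcases x with a | b <;> rcases y with a' | b' <;> simp [φ.map_adj_iff, ψ.map_adj_iff]

variable [Fintype α] [Fintype β]

theorem vertexWeight_joinG_inl (f : Sym2 (α ⊕ β) → ℕ) (a : α) :
    vertexWeight (joinG G H) f (.inl a) =
      vertexWeight G (f ∘ Sym2.map Sum.inl) a + ∑ b, f s(.inl a, .inr b) := by
  simp [vertexWeight_eq_sum]

theorem vertexWeight_joinG_inr (f : Sym2 (α ⊕ β) → ℕ) (b : β) :
    vertexWeight (joinG G H) f (.inr b) =
      ∑ a, f s(.inl a, .inr b) + vertexWeight H (f ∘ Sym2.map Sum.inr) b := by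
  simp [vertexWeight_eq_sum, Sym2.eq_swap (a := Sum.inr b)]

theorem vertexWeight_bot (f : Sym2 α → ℕ) (a : α) : vertexWeight ⊥ f a = 0 := by
  simp [vertexWeight_eq_sum]

end Join

section Cycle

variable {p : ℕ} [NeZero p]

theorem cycleGraph_adj_iff_eq_add_one (hp : 2 ≤ p) {u v : Fin p} :
    (cycleGraph p).Adj u v ↔ v = u + 1 ∨ u = v + 1 := by
  obtain ⟨k, rfl⟩ := Nat.exists_eq_add_of_le' hp
  rw [cycleGraph_adj, sub_eq_iff_eq_add', sub_eq_iff_eq_add', or_comm, add_comm u, add_comm v]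

theorem fin_add_one_ne_self (hp : 2 ≤ p) (i : Fin p) : i + 1 ≠ i := by
  simpa [Fin.one_eq_zero_iff] using Nat.ne_of_gt hp

theorem fin_add_two_ne_self (hp : 3 ≤ p) (i : Fin p) : i + 1 + 1 ≠ i := by
  have h2 : ((1 + 1 : Fin p) : ℕ) = 2 := by
    rw [Fin.val_add, Fin.val_one', Nat.mod_eq_of_lt (Nat.lt_of_succ_lt hp), Nat.mod_eq_of_lt hp]
  rw [add_assoc, Ne, add_eq_left, Fin.ext_iff, h2]
  exact two_ne_zero

theorem vertexWeight_cycleGraph (hp : 3 ≤ p) (f : Sym2 (Fin p) → ℕ) (i : Fin p) :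
    vertexWeight (cycleGraph p) f i = f s(i, i + 1) + f s(i - 1, i) := by
  have hne : i + 1 ≠ i - 1 := fun h => fin_add_two_ne_self hp i (by rw [h, sub_add_cancel])
  have hadj (y : Fin p) : (cycleGraph p).Adj i y ↔ y ∈ ({i + 1, i - 1} : Finset (Fin p)) := by
    simp [cycleGraph_adj_iff_eq_add_one (Nat.le_of_succ_le hp), eq_sub_iff_add_eq, eq_comm]
  simp only [vertexWeight_eq_sum, hadj, Finset.sum_ite_mem, Finset.univ_inter,
    Finset.sum_pair hne, Sym2.eq_swap (a := i - 1)]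

/-- Rotation of the cycle by `k` steps. -/
def cycleRotation (k : Fin p) : cycleGraph p ≃g cycleGraph p where
  toEquiv := Equiv.addRight k
  map_rel_iff' := by simp [cycleGraph_adj']

end Cycle

section CycleJoinNull

/-- The join `C_p ∨ O_r`. -/
abbrev cycleJoinNull (p r : ℕ) : SimpleGraph (Fin p ⊕ Fin r) :=
  joinG (cycleGraph p) ⊥

variable {p r : ℕ}

theorem ne_of_cycleJoinNull_adj (C : (cycleGraph p).Coloring Bool) {w : Fin p ⊕ Fin r → ℕ}
    {a b d : ℕ} (hinl : ∀ i, w (.inl i) = if C i then a else b) (hinr : ∀ j, w (.inr j) = d)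
    (hab : a ≠ b) (had : a ≠ d) (hbd : b ≠ d) ⦃x y : Fin p ⊕ Fin r⦄
    (hxy : (cycleJoinNull p r).Adj x y) : w x ≠ w y := by
  rcases x with i | j <;> rcases y with i' | j'
  · have hC := C.valid (joinG_adj_inl_inl.mp hxy)
    rw [hinl, hinl]
    cases hi : C i <;> cases hi' : C i' <;> simp_all [hab.symm]
  · rw [hinl, hinr]
    split_ifs <;> assumption
  · rw [hinl, hinr]
    split_ifs <;> exact Ne.symm ‹_›
  · exact absurd (joinG_adj_inr_inr.mp hxy) not_false

variable [NeZero p]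

/-- Enumeration of the edges of `C_p ∨ O_r`: `inl i` is the cycle edge from `i` to `i + 1`, and
`inr (i, j)` is the spoke from the cycle vertex `i` to the `j`-th vertex of `O_r`. -/
def joinEdge : Fin p ⊕ Fin p × Fin r → Sym2 (Fin p ⊕ Fin r)
  | .inl i => s(.inl i, .inl (i + 1))
  | .inr x => s(.inl x.1, .inr x.2)

theorem joinEdge_injective (hp : 3 ≤ p) :
    Function.Injective (joinEdge : Fin p ⊕ Fin p × Fin r → _) := by
  rintro (i | ⟨i, j⟩) (k | ⟨k, l⟩) h
  · simp only [joinEdge, Sym2.eq_iff, Sum.inl.injEq] at h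
    rcases h with ⟨rfl, -⟩ | ⟨rfl, h⟩
    · rfl
    · exact absurd h (fin_add_two_ne_self hp k)
  all_goals simp_all [joinEdge]

theorem range_joinEdge (hp : 2 ≤ p) :
    Set.range (joinEdge : Fin p ⊕ Fin p × Fin r → _) = (cycleJoinNull p r).edgeSet := by
  ext e
  refine ⟨?_, Sym2.ind (fun u v huv => ?_) e⟩
  · rintro ⟨i | ⟨i, j⟩, rfl⟩ <;> simp [joinEdge, cycleGraph_adj_iff_eq_add_one hp]
  · rcases u with a | a <;> rcases v with b | b
    · rw [mem_edgeSet, joinG_adj_inl_inl, cycleGraph_adj_iff_eq_add_one hp] at huv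
      rcases huv with rfl | rfl
      · exact ⟨.inl a, rfl⟩
      · exact ⟨.inl b, Sym2.eq_swap⟩
    · exact ⟨.inr (a, b), rfl⟩
    · exact ⟨.inr (b, a), Sym2.eq_swap⟩
    · exact absurd (joinG_adj_inr_inr.mp huv) not_false

theorem ncard_edgeSet_cycleJoinNull (hp : 3 ≤ p) :
    (cycleJoinNull p r).edgeSet.ncard = p + p * r := by
  rw [← range_joinEdge (Nat.le_of_succ_le hp), Set.ncard_range_of_injective (joinEdge_injective hp)]
  simp

theorem chiLA_deleteEdges_joinEdge_inl (i i' : Fin p) :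
    chiLA ((cycleJoinNull p r).deleteEdges {joinEdge (.inl i)}) =
      chiLA ((cycleJoinNull p r).deleteEdges {joinEdge (.inl i')}) := by
  let φ : cycleJoinNull p r ≃g cycleJoinNull p r :=
    joinGCongr (cycleRotation (i' - i)) Iso.refl
  have hφ : Sym2.map φ (joinEdge (.inl i)) = joinEdge (.inl i') := by
    change s(Sum.inl (i + (i' - i)), Sum.inl (i + 1 + (i' - i))) = s(_, _)
    rw [add_right_comm, add_sub_cancel]
  rw [← hφ]
  exact chiLA_congr (deleteEdgeIso φ _)

theorem chiLA_deleteEdges_joinEdge_inr (x x' : Fin p × Fin r) :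
    chiLA ((cycleJoinNull p r).deleteEdges {joinEdge (.inr x)}) =
      chiLA ((cycleJoinNull p r).deleteEdges {joinEdge (.inr x')}) := by
  let ψ : (⊥ : SimpleGraph (Fin r)) ≃g (⊥ : SimpleGraph (Fin r)) :=
    ⟨Equiv.swap x.2 x'.2, Iff.rfl⟩
  let φ : cycleJoinNull p r ≃g cycleJoinNull p r :=
    joinGCongr (cycleRotation (x'.1 - x.1)) ψ
  have hφ : Sym2.map φ (joinEdge (.inr x)) = joinEdge (.inr x') := by
    change s(Sum.inl (x.1 + (x'.1 - x.1)), Sum.inr (Equiv.swap x.2 x'.2 x.2)) = s(_, _)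
    rw [add_sub_cancel, Equiv.swap_apply_left]
  rw [← hφ]
  exact chiLA_congr (deleteEdgeIso φ _)

theorem isNClique_three_deleteEdges (hp : 3 ≤ p) (j : Fin r) {i : Fin p}
    {e : Sym2 (Fin p ⊕ Fin r)} (he : .inl i ∈ e) :
    ((cycleJoinNull p r).deleteEdges {e}).IsNClique 3 {.inl (i + 1), .inl (i + 1 + 1), .inr j} := by
  have h1 := fin_add_one_ne_self (Nat.le_of_succ_le hp) i
  have h2 := fin_add_two_ne_self hp i
  have avoid {u v : Fin p ⊕ Fin r} (hu : .inl i ≠ u) (hv : .inl i ≠ v) : s(u, v) ≠ e := by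
    rintro rfl
    simp_all
  simp only [is3Clique_triple_iff, deleteEdges_adj, Set.mem_singleton_iff]
  refine ⟨⟨?_, avoid ?_ ?_⟩, ⟨?_, avoid ?_ ?_⟩, ⟨?_, avoid ?_ ?_⟩⟩ <;>
    simp [cycleGraph_adj_iff_eq_add_one (Nat.le_of_succ_le hp), h1.symm, h2.symm]

/-- The edge labeling of `C_p ∨ O_r` given by labels on the enumeration `joinEdge`, with junk value
`0` off the edges. -/
noncomputable def joinLabeling (l : Fin p ⊕ Fin p × Fin r → ℕ) : Sym2 (Fin p ⊕ Fin r) → ℕ :=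
  Function.extend joinEdge l 0

theorem joinLabeling_joinEdge (hp : 3 ≤ p) (l : Fin p ⊕ Fin p × Fin r → ℕ) (x) :
    joinLabeling l (joinEdge x) = l x :=
  (joinEdge_injective hp).extend_apply l 0 x

theorem vertexWeight_joinLabeling_inl (hp : 3 ≤ p) (l : Fin p ⊕ Fin p × Fin r → ℕ) (i : Fin p) :
    vertexWeight (cycleJoinNull p r) (joinLabeling l) (.inl i) =
      l (.inl i) + l (.inl (i - 1)) + ∑ j, l (.inr (i, j)) := by
  have hcycle (k : Fin p) : joinLabeling l s(.inl k, .inl (k + 1)) = l (.inl k) :=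
    joinLabeling_joinEdge hp l (.inl k)
  have hspoke (j : Fin r) : joinLabeling l s(.inl i, .inr j) = l (.inr (i, j)) :=
    joinLabeling_joinEdge hp l (.inr (i, j))
  have hpred := hcycle (i - 1)
  rw [sub_add_cancel] at hpred
  rw [vertexWeight_joinG_inl, vertexWeight_cycleGraph hp]
  simp only [Function.comp_apply, Sym2.map_mk, hcycle, hspoke, hpred]

theorem vertexWeight_joinLabeling_inr (hp : 3 ≤ p) (l : Fin p ⊕ Fin p × Fin r → ℕ) (j : Fin r) :
    vertexWeight (cycleJoinNull p r) (joinLabeling l) (.inr j) = ∑ i, l (.inr (i, j)) := by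
  rw [vertexWeight_joinG_inr, vertexWeight_bot, add_zero]
  exact Finset.sum_congr rfl fun i _ => joinLabeling_joinEdge hp l (.inr (i, j))

theorem bijOn_joinLabeling (hp : 3 ≤ p) {l : Fin p ⊕ Fin p × Fin r → ℕ}
    (hinj : Function.Injective l) (hlt : ∀ x, l x < p + p * r) :
    Set.BijOn (joinLabeling l) (cycleJoinNull p r).edgeSet
      (Set.Iio (cycleJoinNull p r).edgeSet.ncard) := by
  have hcomp : joinLabeling l ∘ joinEdge = l := funext (joinLabeling_joinEdge hp l)
  have hrange : Set.range l = Set.Iio (p + p * r) := by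
    simpa using congrArg (fun s : Finset ℕ => (s : Set ℕ))
      (image_eq_range_card (s := univ) hinj.injOn (by simpa using hlt))
  rw [ncard_edgeSet_cycleJoinNull hp, ← range_joinEdge (Nat.le_of_succ_le hp), ← hrange]
  nth_rw 2 [← hcomp]
  rw [Set.range_comp]
  refine Set.InjOn.bijOn_image (Function.Injective.injOn_range ?_)
  rwa [hcomp]

theorem chiLA_deleteEdges_joinEdge_eq_three (hp : 3 ≤ p) [NeZero r]
    {l : Fin p ⊕ Fin p × Fin r → ℕ} (hinj : Function.Injective l) (hlt : ∀ x, l x < p + p * r)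
    (C : (cycleGraph p).Coloring Bool) {a b d : ℕ}
    (hrow : ∀ i, l (.inl i) + l (.inl (i - 1)) + ∑ j, l (.inr (i, j)) = if C i then a else b)
    (hcol : ∀ j, ∑ i, l (.inr (i, j)) = d)
    (hab : a ≠ b) (had : a ≠ d) (hbd : b ≠ d) {x : Fin p ⊕ Fin p × Fin r} (hx : l x = 0) :
    chiLA ((cycleJoinNull p r).deleteEdges {joinEdge x}) = 3 := by
  have hinl (i : Fin p) := (vertexWeight_joinLabeling_inl hp l i).trans (hrow i)
  have hinr (j : Fin r) := (vertexWeight_joinLabeling_inr hp l j).trans (hcol j)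
  have hzero : joinLabeling l (joinEdge x) = 0 := (joinLabeling_joinEdge hp l x).trans hx
  have hf : IsZeroBasedLocalAntimagic (cycleJoinNull p r) (joinLabeling l) :=
    ⟨bijOn_joinLabeling hp hinj hlt, ne_of_cycleJoinNull_adj C hinl hinr hab had hbd⟩
  have hmem : joinEdge x ∈ (cycleJoinNull p r).edgeSet :=
    range_joinEdge (Nat.le_of_succ_le hp) ▸ Set.mem_range_self x
  have hcolors :
      colorCount ((cycleJoinNull p r).deleteEdges {joinEdge x}) (joinLabeling l) ≤ 3 := by
    refine (Finset.card_le_card ?_).trans (Finset.card_le_three (a := a) (b := b) (c := d))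
    refine Finset.image_subset_iff.mpr fun v _ => ?_
    rw [vertexWeight_deleteEdges_of_eq_zero hzero]
    rcases v with i | j
    · rw [hinl]
      split_ifs <;> simp
    · simp [hinr]
  obtain ⟨i, hi⟩ : ∃ i, .inl i ∈ joinEdge x := by
    rcases x with i | ⟨i, j⟩ <;> exact ⟨i, Sym2.mem_mk_left _ _⟩
  exact chiLA_eq_of_isNClique (hf.deleteEdges hmem hzero)
    (isNClique_three_deleteEdges hp 0 hi) hcolors

end CycleJoinNull

section EvenCycle

/-- Labels of the cycle edges: the edge from `i` to `i + 1` of `C_{2m}` gets `k` if `i = 2k`, and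
`m + k` if `i = 2k + 1`. -/
def cycleLabel (m i : ℕ) : ℕ :=
  if i % 2 = 0 then i / 2 else m + i / 2

/-- The block (quotient by `2m`) of the label of the spoke from `i` to `j`. Reflecting `j` at the
even `i` makes the blocks of every column add up to the same value. -/
def spokeBlock (N i j : ℕ) : ℕ :=
  if i % 2 = 0 then 2 * N - j else j

/-- The remainder modulo `2m` of the label of the spoke at `i` whose label lies in block `b`.
Off the central block `N` the even `i` take the upper half of the remainders and the odd `i` the
lower half. The blocks `b < N` and `b > N` are arranged in opposite orders, so that they cancel in
pairs in a row sum; the central block cancels the cycle edges, and the block `0` corrects the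
irregularity at `i = 0` caused by the edge from `2m - 1` to `0`. -/
def spokeResidue (m N b i : ℕ) : ℕ :=
  if i % 2 = 0 then
    if b = N then 2 * m - 1 - i
    else if b = 0 then (if i = 0 then m else 2 * m - i / 2)
    else if b < N then 2 * m - 1 - i / 2
    else m + i / 2
  else
    if b = N then 2 * m - 1 - i
    else if b < N then i / 2
    else m - 1 - i / 2

/-- Labels of the spokes; they fill the interval `[0, 2m(2N + 1))`. -/
def spokeLabel (m N i j : ℕ) : ℕ :=
  2 * m * spokeBlock N i j + spokeResidue m N (spokeBlock N i j) i

variable {m N : ℕ}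

theorem cycleLabel_lt {i : ℕ} (hi : i < 2 * m) : cycleLabel m i < 2 * m := by
  unfold cycleLabel
  split_ifs <;> omega

theorem cycleLabel_injOn : Set.InjOn (cycleLabel m) (Set.Iio (2 * m)) := by
  intro i hi i' hi' h
  simp only [cycleLabel, Set.mem_Iio] at *
  split_ifs at h <;> omega

theorem spokeResidue_lt (b : ℕ) {i : ℕ} (hi : i < 2 * m) : spokeResidue m N b i < 2 * m := by
  unfold spokeResidue
  split_ifs <;> omega

theorem spokeBlock_lt {i j : ℕ} (hj : j < 2 * N + 1) : spokeBlock N i j < 2 * N + 1 := by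
  unfold spokeBlock
  split_ifs <;> omega

theorem eq_of_spokeResidue_eq {b b' i i' : ℕ} (hi : i < 2 * m) (hi' : i' < 2 * m)
    (hcentre : b = N ↔ b' = N) (hparity : i % 2 = i' % 2 → b = b')
    (h : spokeResidue m N b i = spokeResidue m N b' i') : i = i' := by
  unfold spokeResidue at h
  split_ifs at h <;> omega

theorem spokeLabel_lt {i j : ℕ} (hi : i < 2 * m) (hj : j < 2 * N + 1) :
    spokeLabel m N i j < 2 * m * (2 * N + 1) :=
  calc spokeLabel m N i j < 2 * m * spokeBlock N i j + 2 * m :=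
        Nat.add_lt_add_left (spokeResidue_lt _ hi) _
    _ = 2 * m * (spokeBlock N i j + 1) := by ring
    _ ≤ 2 * m * (2 * N + 1) := Nat.mul_le_mul_left _ (spokeBlock_lt hj)

theorem eq_of_spokeLabel_eq {i i' j j' : ℕ} (hi : i < 2 * m) (hi' : i' < 2 * m)
    (hj : j < 2 * N + 1) (hj' : j' < 2 * N + 1) (h : spokeLabel m N i j = spokeLabel m N i' j') :
    i = i' ∧ j = j' := by
  have hpos : 0 < 2 * m := Nat.zero_lt_of_lt hi
  have hblock : spokeBlock N i j = spokeBlock N i' j' := by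
    simpa [spokeLabel, Nat.mul_add_div hpos, Nat.div_eq_of_lt, spokeResidue_lt, hi, hi'] using
      congrArg (· / (2 * m)) h
  have hres : spokeResidue m N (spokeBlock N i j) i = spokeResidue m N (spokeBlock N i j) i' := by
    simpa [spokeLabel, ← hblock] using h
  obtain rfl : i = i' := eq_of_spokeResidue_eq hi hi' Iff.rfl (fun _ => rfl) hres
  refine ⟨rfl, ?_⟩
  unfold spokeBlock at hblock
  split_ifs at hblock <;> omega

theorem spokeLabel_one_zero (hN : 1 ≤ N) : spokeLabel m N 1 0 = 0 := by
  simp [spokeLabel, spokeBlock, spokeResidue, Nat.ne_of_lt hN, Nat.ne_of_gt hN]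

theorem sum_spokeBlock {j : ℕ} (hj : j < 2 * N + 1) (m : ℕ) :
    ∑ i ∈ range (2 * m), spokeBlock N i j = m * (2 * N) := by
  induction m with
  | zero => simp
  | succ k ih =>
    have heven : spokeBlock N (2 * k) j = 2 * N - j := by simp [spokeBlock]
    have hodd : spokeBlock N (2 * k + 1) j = j := by simp [spokeBlock, Nat.add_mod]
    have hpair : 2 * N - j + j = 2 * N := Nat.sub_add_cancel (Nat.le_of_lt_succ hj)
    rw [Nat.mul_succ, sum_range_succ, sum_range_succ, ih, heven, hodd, add_assoc, hpair,
      add_one_mul]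

theorem sum_spokeResidue_column {j : ℕ} (hj : j < 2 * N + 1) :
    ∑ i ∈ range (2 * m), spokeResidue m N (spokeBlock N i j) i = m * (2 * m - 1) := by
  have hinj : Set.InjOn (fun i => spokeResidue m N (spokeBlock N i j) i) (range (2 * m)) := by
    intro i hi i' hi'
    rw [mem_coe, mem_range] at hi hi'
    refine eq_of_spokeResidue_eq hi hi' ?_ ?_ <;> unfold spokeBlock <;> split_ifs <;> omega
  have himage := image_eq_range_card hinj fun i hi => by
    simpa using spokeResidue_lt (spokeBlock N i j) (mem_range.mp hi)
  rw [card_range] at himage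
  calc ∑ i ∈ range (2 * m), spokeResidue m N (spokeBlock N i j) i = ∑ k ∈ range (2 * m), k := by
        conv_rhs => rw [← himage, sum_image hinj]
    _ = m * (2 * m - 1) := by
        rw [sum_range_id, mul_assoc, Nat.mul_div_cancel_left _ two_pos]

theorem sum_spokeLabel_column {j : ℕ} (hj : j < 2 * N + 1) :
    ∑ i ∈ range (2 * m), spokeLabel m N i j = 4 * m ^ 2 * N + m * (2 * m - 1) := by
  simp only [spokeLabel]
  rw [sum_add_distrib, ← mul_sum, sum_spokeBlock hj, sum_spokeResidue_column hj]
  ring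

theorem sum_spokeLabel_row (m N i : ℕ) :
    ∑ j ∈ range (2 * N + 1), spokeLabel m N i j =
      2 * m * (N * (2 * N + 1)) + ∑ b ∈ range (2 * N + 1), spokeResidue m N b i := by
  have hblock : ∑ j ∈ range (2 * N + 1), spokeLabel m N i j =
      ∑ b ∈ range (2 * N + 1), (2 * m * b + spokeResidue m N b i) := by
    by_cases hi : i % 2 = 0
    · rw [← sum_range_reflect (fun b => 2 * m * b + spokeResidue m N b i)]
      simp [spokeLabel, spokeBlock, hi]
    · simp [spokeLabel, spokeBlock, hi]
  have hid : ∑ b ∈ range (2 * N + 1), b = N * (2 * N + 1) := by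
    rw [sum_range_id, Nat.add_sub_cancel, mul_left_comm, Nat.mul_div_cancel_left _ two_pos,
      mul_comm]
  rw [hblock, sum_add_distrib, ← mul_sum, hid]

theorem sum_range_two_mul_add_one (f : ℕ → ℕ) (N : ℕ) :
    ∑ b ∈ range (2 * N + 1), f b =
      ∑ b ∈ range N, f b + f N + ∑ b ∈ range N, f (N + 1 + b) := by
  rw [show 2 * N + 1 = N + 1 + N by ring, sum_range_add, sum_range_succ]

theorem sum_spokeResidue_of_even {k : ℕ} (hk : k < m) (M : ℕ) :
    ∑ b ∈ range (2 * (M + 1) + 1), spokeResidue m (M + 1) b (2 * k) =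
      (if k = 0 then m else 2 * m - k) + M * (2 * m - 1 - k) + (2 * m - 1 - 2 * k) +
        (M + 1) * (m + k) := by
  have hzero : spokeResidue m (M + 1) 0 (2 * k) = if k = 0 then m else 2 * m - k := by
    simp [spokeResidue]
  have hlow : ∀ b ∈ range M, spokeResidue m (M + 1) (b + 1) (2 * k) = 2 * m - 1 - k := by
    intro b hb
    simp [spokeResidue, mem_range.mp hb, (mem_range.mp hb).ne]
  have hmid : spokeResidue m (M + 1) (M + 1) (2 * k) = 2 * m - 1 - 2 * k := by
    simp [spokeResidue]
  have hhigh (b : ℕ) : spokeResidue m (M + 1) (M + 1 + 1 + b) (2 * k) = m + k := by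
    unfold spokeResidue
    split_ifs <;> omega
  rw [sum_range_two_mul_add_one, sum_range_succ', sum_congr rfl hlow, hzero, hmid]
  simp only [hhigh, sum_const, card_range, smul_eq_mul]
  ring

theorem sum_spokeResidue_of_odd {k : ℕ} (hk : k < m) (N : ℕ) :
    ∑ b ∈ range (2 * N + 1), spokeResidue m N b (2 * k + 1) =
      2 * m - 2 - 2 * k + N * (m - 1) := by
  have hlow : ∀ b ∈ range N, spokeResidue m N b (2 * k + 1) = k := by
    intro b hb
    rw [mem_range] at hb
    unfold spokeResidue
    split_ifs <;> omega
  have hmid : spokeResidue m N N (2 * k + 1) = 2 * m - 2 - 2 * k := by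
    unfold spokeResidue
    split_ifs <;> omega
  have hhigh (b : ℕ) : spokeResidue m N (N + 1 + b) (2 * k + 1) = m - 1 - k := by
    unfold spokeResidue
    split_ifs <;> omega
  have hpair : k + (m - 1 - k) = m - 1 := by omega
  rw [sum_range_two_mul_add_one, sum_congr rfl hlow, hmid, ← hpair]
  simp only [hhigh, sum_const, card_range, smul_eq_mul]
  ring

theorem fin_val_sub_one [NeZero m] (i : Fin m) :
    ((i - 1 : Fin m) : ℕ) = if (i : ℕ) = 0 then m - 1 else i - 1 := by
  obtain ⟨k, rfl⟩ := Nat.exists_eq_succ_of_ne_zero (NeZero.ne m)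
  simp only [Fin.coe_sub_one, Fin.ext_iff, Fin.val_zero, Nat.succ_sub_one]

theorem cycleLabel_add_spokeResidue_of_even {k : ℕ} [NeZero (2 * m)] (hN : 1 ≤ N) {i : Fin (2 * m)}
    (hi : (i : ℕ) = 2 * k) :
    cycleLabel m i + cycleLabel m (i - 1 : Fin (2 * m)) +
      ∑ b ∈ range (2 * N + 1), spokeResidue m N b i = (N + 1) * (3 * m - 1) := by
  obtain ⟨M, rfl⟩ := Nat.exists_eq_add_of_le' hN
  have hk : k < m := by omega
  have hcycle : cycleLabel m i + cycleLabel m (i - 1 : Fin (2 * m)) =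
      if k = 0 then 2 * m - 1 else m + 2 * k - 1 := by
    rw [fin_val_sub_one, hi]
    unfold cycleLabel
    split_ifs <;> omega
  have hcorrected : (if k = 0 then 2 * m - 1 else m + 2 * k - 1) +
      (if k = 0 then m else 2 * m - k) + (2 * m - 1 - 2 * k) + (m + k) = 2 * (3 * m - 1) := by
    split_ifs <;> omega
  have hpair : 2 * m - 1 - k + (m + k) = 3 * m - 1 := by omega
  rw [hcycle, hi, sum_spokeResidue_of_even hk]
  linear_combination hcorrected + M * hpair

theorem cycleLabel_add_spokeResidue_of_odd {k : ℕ} [NeZero (2 * m)] (N : ℕ) {i : Fin (2 * m)}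
    (hi : (i : ℕ) = 2 * k + 1) :
    cycleLabel m i + cycleLabel m (i - 1 : Fin (2 * m)) +
      ∑ b ∈ range (2 * N + 1), spokeResidue m N b i = 3 * m - 2 + N * (m - 1) := by
  have hk : k < m := by omega
  have hcycle : cycleLabel m i + cycleLabel m (i - 1 : Fin (2 * m)) = m + 2 * k := by
    rw [fin_val_sub_one, hi, if_neg (Nat.succ_ne_zero _), Nat.add_sub_cancel]
    unfold cycleLabel
    split_ifs <;> omega
  rw [hcycle, hi, sum_spokeResidue_of_odd hk]
  omega

/-- The labeling of the edges of `C_{2m} ∨ O_{2N+1}` in which the labels of the cycle edges are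
shifted by `γ` and those of the spokes by `σ`. -/
def edgeLabel (m N γ σ : ℕ) : Fin (2 * m) ⊕ Fin (2 * m) × Fin (2 * N + 1) → ℕ :=
  Sum.elim (fun i => γ + cycleLabel m i) fun x => σ + spokeLabel m N x.1 x.2

theorem edgeLabel_lt {γ σ q : ℕ} (hγ : γ + 2 * m ≤ q) (hσ : σ + 2 * m * (2 * N + 1) ≤ q)
    (x : Fin (2 * m) ⊕ Fin (2 * m) × Fin (2 * N + 1)) : edgeLabel m N γ σ x < q := by
  rcases x with i | x
  · exact (Nat.add_lt_add_left (cycleLabel_lt i.2) γ).trans_le hγ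
  · exact (Nat.add_lt_add_left (spokeLabel_lt x.1.2 x.2.2) σ).trans_le hσ

theorem edgeLabel_injective {γ σ : ℕ} (h : γ + 2 * m ≤ σ ∨ σ + 2 * m * (2 * N + 1) ≤ γ) :
    Function.Injective (edgeLabel m N γ σ) := by
  refine Function.Injective.sumElim (fun i i' hii' => ?_) ?_ fun i x hix => ?_
  · exact Fin.ext (cycleLabel_injOn i.2 i'.2 (Nat.add_left_cancel hii'))
  · rintro ⟨i, j⟩ ⟨i', j'⟩ hij
    obtain ⟨hi, hj⟩ := eq_of_spokeLabel_eq i.2 i'.2 j.2 j'.2 (Nat.add_left_cancel hij)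
    exact Prod.ext (Fin.ext hi) (Fin.ext hj)
  · have hcycle := cycleLabel_lt i.2
    have hspoke := spokeLabel_lt x.1.2 x.2.2
    omega

/-- The sum of the labels at the cycle vertices of even index under `edgeLabel m N γ σ`. -/
def evenRowSum (m N γ σ : ℕ) : ℕ :=
  (N + 1) * (3 * m - 1) + 2 * m * (N * (2 * N + 1)) + 2 * γ + (2 * N + 1) * σ

/-- The sum of the labels at the cycle vertices of odd index under `edgeLabel m N γ σ`. -/
def oddRowSum (m N γ σ : ℕ) : ℕ :=
  3 * m - 2 + N * (m - 1) + 2 * m * (N * (2 * N + 1)) + 2 * γ + (2 * N + 1) * σ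

/-- The sum of the labels at every vertex of `O_{2N+1}` under `edgeLabel m N γ σ`. -/
def columnSum (m N σ : ℕ) : ℕ :=
  4 * m ^ 2 * N + m * (2 * m - 1) + 2 * m * σ

theorem sum_edgeLabel_row [NeZero (2 * m)] (hN : 1 ≤ N) (γ σ : ℕ) (i : Fin (2 * m)) :
    edgeLabel m N γ σ (.inl i) + edgeLabel m N γ σ (.inl (i - 1)) +
        ∑ j, edgeLabel m N γ σ (.inr (i, j)) =
      if cycleGraph.bicoloring_of_even (2 * m) (even_two_mul m) i
      then evenRowSum m N γ σ else oddRowSum m N γ σ := by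
  have hspokes : ∑ j, edgeLabel m N γ σ (.inr (i, j)) =
      (2 * N + 1) * σ +
        (2 * m * (N * (2 * N + 1)) + ∑ b ∈ range (2 * N + 1), spokeResidue m N b i) := by
    simp only [edgeLabel, Sum.elim_inr, sum_add_distrib, sum_const, card_univ, Fintype.card_fin,
      smul_eq_mul, Fin.sum_univ_eq_sum_range (spokeLabel m N i), sum_spokeLabel_row]
  have hcolor : cycleGraph.bicoloring_of_even (2 * m) (even_two_mul m) i =
      decide ((i : ℕ) % 2 = 0) := rfl
  rw [hspokes, hcolor]
  simp only [edgeLabel, Sum.elim_inl]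
  rcases Nat.even_or_odd' i with ⟨k, hk | hk⟩
  · have hrow := cycleLabel_add_spokeResidue_of_even hN hk
    rw [if_pos (by simp [hk]), evenRowSum, ← hrow]
    ring
  · have hrow := cycleLabel_add_spokeResidue_of_odd N hk
    rw [if_neg (by simp [hk, Nat.add_mod]), oddRowSum, ← hrow]
    ring

theorem sum_edgeLabel_column (γ σ : ℕ) (j : Fin (2 * N + 1)) :
    ∑ i, edgeLabel m N γ σ (.inr (i, j)) = columnSum m N σ := by
  simp only [edgeLabel, columnSum, Sum.elim_inr, sum_add_distrib, sum_const, card_univ,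
    Fintype.card_fin, smul_eq_mul, Fin.sum_univ_eq_sum_range (fun i => spokeLabel m N i j),
    sum_spokeLabel_column j.2]
  ring

theorem oddRowSum_lt_evenRowSum (hm : 1 ≤ m) (N γ σ : ℕ) :
    oddRowSum m N γ σ < evenRowSum m N γ σ := by
  obtain ⟨k, rfl⟩ := Nat.exists_eq_add_of_le' hm
  have h1 : 3 * (k + 1) - 1 = 3 * k + 2 := by omega
  have h2 : 3 * (k + 1) - 2 = 3 * k + 1 := by omega
  rw [evenRowSum, oddRowSum, h1, h2, Nat.add_sub_cancel]
  nlinarith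

theorem evenRowSum_sub_columnSum (hm : 1 ≤ m) (N γ σ : ℕ) :
    (evenRowSum m N γ σ : ℤ) - columnSum m N σ =
      4 * m * N * (N - m) + (5 * m - 1) * N + 4 * m - 1 - 2 * m ^ 2 + 2 * γ +
        (2 * N + 1 - 2 * m) * σ := by
  have h1 : ((3 * m - 1 : ℕ) : ℤ) = 3 * m - 1 := by omega
  have h2 : ((2 * m - 1 : ℕ) : ℤ) = 2 * m - 1 := by omega
  simp only [evenRowSum, columnSum]
  push_cast [h1, h2]
  ring

theorem oddRowSum_sub_columnSum (hm : 1 ≤ m) (N γ σ : ℕ) :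
    (oddRowSum m N γ σ : ℤ) - columnSum m N σ =
      4 * m * N * (N - m) + (3 * m - 1) * N + 4 * m - 2 - 2 * m ^ 2 + 2 * γ +
        (2 * N + 1 - 2 * m) * σ := by
  have h1 : ((3 * m - 2 : ℕ) : ℤ) = 3 * m - 2 := by omega
  have h2 : ((2 * m - 1 : ℕ) : ℤ) = 2 * m - 1 := by omega
  have h3 : ((m - 1 : ℕ) : ℤ) = m - 1 := by omega
  simp only [oddRowSum, columnSum]
  push_cast [h1, h2, h3]
  ring

-- In each of the following comparisons the substitution makes all coefficients of the difference
-- have the same sign.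

theorem evenRowSum_lt_columnSum_of_lt (h : N < m) :
    evenRowSum m N 0 (2 * m) < columnSum m N (2 * m) := by
  rw [← Int.ofNat_lt, ← sub_neg, evenRowSum_sub_columnSum (Nat.one_le_of_lt h), ← neg_pos]
  obtain ⟨s, rfl⟩ := Nat.exists_eq_add_of_lt h
  push_cast
  ring_nf
  positivity

theorem columnSum_lt_oddRowSum_of_le (hm : 1 ≤ m) (h : m ≤ N) :
    columnSum m N (2 * m) < oddRowSum m N 0 (2 * m) := by
  rw [← Int.ofNat_lt, ← sub_pos, oddRowSum_sub_columnSum hm]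
  obtain ⟨k, rfl⟩ := Nat.exists_eq_add_of_le' hm
  obtain ⟨s, rfl⟩ := Nat.exists_eq_add_of_le h
  push_cast
  ring_nf
  positivity

theorem columnSum_lt_oddRowSum_of_le_add_two (hm : 2 ≤ m) (h : m ≤ N + 2) :
    columnSum m N 0 < oddRowSum m N (2 * m * (2 * N + 1)) 0 := by
  rw [← Int.ofNat_lt, ← sub_pos, oddRowSum_sub_columnSum (one_le_two.trans hm)]
  obtain ⟨k, rfl⟩ := Nat.exists_eq_add_of_le' hm
  obtain ⟨s, rfl⟩ := Nat.exists_eq_add_of_le (Nat.le_of_add_le_add_right h)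
  push_cast
  ring_nf
  positivity

theorem oddRowSum_lt_columnSum_of_add_two_lt (hN : 1 ≤ N) (h : N + 2 < m) :
    oddRowSum m N (2 * m * (2 * N + 1)) 0 < columnSum m N 0 := by
  rw [← Int.ofNat_lt, ← sub_neg, oddRowSum_sub_columnSum (Nat.one_le_of_lt h), ← neg_pos]
  obtain ⟨M, rfl⟩ := Nat.exists_eq_add_of_le' hN
  obtain ⟨s, rfl⟩ := Nat.exists_eq_add_of_lt h
  push_cast
  ring_nf
  positivity

theorem evenRowSum_lt_columnSum_of_add_three_lt (h : N + 3 < m) :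
    evenRowSum m N (2 * m * (2 * N + 1)) 0 < columnSum m N 0 := by
  rw [← Int.ofNat_lt, ← sub_neg, evenRowSum_sub_columnSum (Nat.one_le_of_lt h), ← neg_pos]
  obtain ⟨s, rfl⟩ := Nat.exists_eq_add_of_lt h
  push_cast
  ring_nf
  positivity

-- Here the difference is `6 - (N + 1) ^ 2`, and `6` is not a square.
theorem evenRowSum_ne_columnSum_of_eq_add_three (h : m = N + 3) :
    evenRowSum m N (2 * m * (2 * N + 1)) 0 ≠ columnSum m N 0 := by
  subst h
  intro heq
  have hdiff := evenRowSum_sub_columnSum (Nat.le_add_left 1 (N + 2)) N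
    (2 * (N + 3) * (2 * N + 1)) 0
  rw [heq, sub_self] at hdiff
  push_cast at hdiff
  have hsq : (N + 1 : ℤ) ^ 2 = 6 := by linear_combination hdiff
  rcases Nat.lt_or_ge N 2 with hN | hN
  · interval_cases N <;> norm_num at hsq
  · nlinarith

theorem rowSums_ne_columnSum_of_shift_spokes (hm : 1 ≤ m) (N : ℕ) :
    evenRowSum m N 0 (2 * m) ≠ columnSum m N (2 * m) ∧
      oddRowSum m N 0 (2 * m) ≠ columnSum m N (2 * m) := by
  have hrows := oddRowSum_lt_evenRowSum hm N 0 (2 * m)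
  rcases Nat.lt_or_ge N m with h | h
  · have heven := evenRowSum_lt_columnSum_of_lt h
    exact ⟨heven.ne, (hrows.trans heven).ne⟩
  · have hodd := columnSum_lt_oddRowSum_of_le hm h
    exact ⟨(hodd.trans hrows).ne', hodd.ne'⟩

theorem rowSums_ne_columnSum_of_shift_cycle (hm : 2 ≤ m) (hN : 1 ≤ N) :
    evenRowSum m N (2 * m * (2 * N + 1)) 0 ≠ columnSum m N 0 ∧
      oddRowSum m N (2 * m * (2 * N + 1)) 0 ≠ columnSum m N 0 := by
  rcases Nat.lt_or_ge (N + 2) m with h | h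
  · refine ⟨?_, (oddRowSum_lt_columnSum_of_add_two_lt hN h).ne⟩
    rcases (Nat.succ_le_of_lt h).eq_or_lt' with h' | h'
    · exact evenRowSum_ne_columnSum_of_eq_add_three h'
    · exact (evenRowSum_lt_columnSum_of_add_three_lt h').ne
  · have hodd := columnSum_lt_oddRowSum_of_le_add_two hm h
    exact ⟨(hodd.trans (oddRowSum_lt_evenRowSum (one_le_two.trans hm) _ _ _)).ne', hodd.ne'⟩

variable [NeZero (2 * m)]

theorem chiLA_deleteEdges_of_edgeLabel_eq_zero (hm : 2 ≤ m) (hN : 1 ≤ N) {γ σ : ℕ}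
    (hshift : γ = 0 ∧ σ = 2 * m ∨ γ = 2 * m * (2 * N + 1) ∧ σ = 0)
    (hne : evenRowSum m N γ σ ≠ columnSum m N σ ∧ oddRowSum m N γ σ ≠ columnSum m N σ)
    {x : Fin (2 * m) ⊕ Fin (2 * m) × Fin (2 * N + 1)} (hx : edgeLabel m N γ σ x = 0) :
    chiLA ((cycleJoinNull (2 * m) (2 * N + 1)).deleteEdges {joinEdge x}) = 3 :=
  chiLA_deleteEdges_joinEdge_eq_three (by omega) (edgeLabel_injective (by omega))
    (edgeLabel_lt (by omega) (by omega))
    (cycleGraph.bicoloring_of_even (2 * m) (even_two_mul m)) (sum_edgeLabel_row hN γ σ)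
    (sum_edgeLabel_column γ σ) (oddRowSum_lt_evenRowSum (one_le_two.trans hm) N γ σ).ne'
    hne.1 hne.2 hx

theorem chiLA_deleteEdges_cycleEdge (hm : 2 ≤ m) (hN : 1 ≤ N) (i : Fin (2 * m)) :
    chiLA ((cycleJoinNull (2 * m) (2 * N + 1)).deleteEdges {joinEdge (.inl i)}) = 3 := by
  rw [chiLA_deleteEdges_joinEdge_inl i 0]
  exact chiLA_deleteEdges_of_edgeLabel_eq_zero hm hN (.inl ⟨rfl, rfl⟩)
    (rowSums_ne_columnSum_of_shift_spokes (one_le_two.trans hm) N) (by simp [edgeLabel, cycleLabel])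

theorem chiLA_deleteEdges_spoke (hm : 2 ≤ m) (hN : 1 ≤ N)
    (x : Fin (2 * m) × Fin (2 * N + 1)) :
    chiLA ((cycleJoinNull (2 * m) (2 * N + 1)).deleteEdges {joinEdge (.inr x)}) = 3 := by
  have hzero : edgeLabel m N (2 * m * (2 * N + 1)) 0 (.inr (1, 0)) = 0 := by
    have hone : ((1 : Fin (2 * m)) : ℕ) = 1 := by
      rw [Fin.val_one', Nat.mod_eq_of_lt (by omega)]
    simp only [edgeLabel, Sum.elim_inr, zero_add, hone, Fin.val_zero, spokeLabel_one_zero hN]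
  rw [chiLA_deleteEdges_joinEdge_inr x (1, 0)]
  exact chiLA_deleteEdges_of_edgeLabel_eq_zero hm hN (.inr ⟨rfl, rfl⟩)
    (rowSums_ne_columnSum_of_shift_cycle hm hN) hzero

end EvenCycle

/-- Theorem: For all integers `m, n ≥ 2` and every edge `e` of `C_{2m} ∨ O_{2n−1}`,
`χ_la((C_{2m} ∨ O_{2n−1}) − e) = 3`. -/
theorem chiLA_evenCycle_join_null_odd_deleteEdge (m n : ℕ) (hm : 2 ≤ m) (hn : 2 ≤ n)
    (e : Sym2 (Fin (2 * m) ⊕ Fin (2 * n - 1)))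
    (he : e ∈ (joinG (cycleGraph (2 * m)) (⊥ : SimpleGraph (Fin (2 * n - 1)))).edgeSet) :
    chiLA ((joinG (cycleGraph (2 * m)) (⊥ : SimpleGraph (Fin (2 * n - 1)))).deleteEdges
      {e}) = 3 := by
  have : NeZero (2 * m) := ⟨by omega⟩
  obtain ⟨N, rfl⟩ := Nat.exists_eq_add_of_le' (Nat.le_of_succ_le hn)
  have hN : 1 ≤ N := Nat.le_of_succ_le_succ hn
  rw [← range_joinEdge (by omega)] at he
  obtain ⟨i | x, rfl⟩ := he
  · exact chiLA_deleteEdges_cycleEdge hm hN i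
  · exact chiLA_deleteEdges_spoke hm hN x
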